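/- Suppose the Fractional assumptions hold for φ, ψ ∈ Φ_w(ℝⁿ). Then ‖χ_Q‖_{L^φ(ℝⁿ)} ≈ |Q|^{α/n}·‖χ_Q‖_{L^ψ(ℝⁿ)}, with implicit constants independent of the cube Q ⊂ ℝⁿ. -/

import Mathlib

open MeasureTheory NNReal ENNReal Filter Set

noncomputable section

/-- `ℝⁿ` with the Euclidean structure. -/
abbrev RSp (n : ℕ) := EuclideanSpace ℝ (Fin n)

variable {n : ℕ}

/-- A cube in `ℝⁿ` with sides parallel to the coordinate axes,
with center `c` and side length `2r`. -/
structure Cube (n : ℕ) where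
  c : RSp n
  r : ℝ
  r_pos : 0 < r

/-- The underlying set of a cube. -/
def Cube.set (Q : Cube n) : Set (RSp n) := {y | ∀ i, |y i - Q.c i| ≤ Q.r}

/-- A weak Φ-function on `Ω` (the class `Φ_w(Ω)`). -/
structure IsWeakPhi (Ω : Set (RSp n)) (φ : RSp n → ℝ≥0 → ℝ≥0∞) : Prop where
  meas : ∀ f : RSp n → ℝ≥0, Measurable f →
    AEMeasurable (fun x => φ x (f x)) (volume.restrict Ω)
  mono : ∀ x ∈ Ω, Monotone (φ x)
  zero : ∀ x ∈ Ω, φ x 0 = 0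
  lim_zero : ∀ x ∈ Ω, Tendsto (fun t : ℝ≥0 => φ x t) (nhdsWithin 0 (Set.Ioi 0)) (nhds 0)
  lim_top : ∀ x ∈ Ω, Tendsto (fun t : ℝ≥0 => φ x t) atTop (nhds ∞)
  almost_inc : ∃ L : ℝ≥0, 1 ≤ L ∧ ∀ x ∈ Ω, ∀ s t : ℝ≥0, 0 < s → s < t →
    φ x s / (s : ℝ≥0∞) ≤ (L : ℝ≥0∞) * (φ x t / (t : ℝ≥0∞))

/-- A convex Φ-function on `Ω` (the class `Φ_c(Ω)`): a weak Φ-function which is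
additionally convex and left-continuous in `t` for a.e. `x ∈ Ω`. -/
structure IsConvexPhi (Ω : Set (RSp n)) (φ : RSp n → ℝ≥0 → ℝ≥0∞)
    extends IsWeakPhi Ω φ : Prop where
  convex : ∀ᵐ x ∂(volume.restrict Ω), ∀ s t a b : ℝ≥0, a + b = 1 →
    φ x (a * s + b * t) ≤ (a : ℝ≥0∞) * φ x s + (b : ℝ≥0∞) * φ x t
  left_cont : ∀ᵐ x ∂(volume.restrict Ω), ∀ t : ℝ≥0,
    Tendsto (φ x) (nhdsWithin t (Set.Iio t)) (nhds (φ x t))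

/-- A strong Φ-function on `Ω` (the class `Φ_s(Ω)`): a weak Φ-function which is
additionally convex and continuous into `[0,∞]` for a.e. `x ∈ Ω`. -/
structure IsStrongPhi (Ω : Set (RSp n)) (φ : RSp n → ℝ≥0 → ℝ≥0∞)
    extends IsWeakPhi Ω φ : Prop where
  convex : ∀ᵐ x ∂(volume.restrict Ω), ∀ s t a b : ℝ≥0, a + b = 1 →
    φ x (a * s + b * t) ≤ (a : ℝ≥0∞) * φ x s + (b : ℝ≥0∞) * φ x t
  cont : ∀ᵐ x ∂(volume.restrict Ω), Continuous (φ x)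

/-- The generalized (left-)inverse `φ⁻¹(x,t) = inf {τ ≥ 0 : φ(x,τ) ≥ t}`. -/
def phiInv (φ : RSp n → ℝ≥0 → ℝ≥0∞) (x : RSp n) (t : ℝ≥0∞) : ℝ≥0∞ :=
  sInf ((fun s : ℝ≥0 => (s : ℝ≥0∞)) '' {s : ℝ≥0 | t ≤ φ x s})

/-- The condition `(aInc)_p` on `Ω`: `t ↦ φ(x,t)/t^p` is almost increasing, uniformly in `x`. -/
def AInc (p : ℝ) (Ω : Set (RSp n)) (φ : RSp n → ℝ≥0 → ℝ≥0∞) : Prop :=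
  ∃ L : ℝ≥0, 1 ≤ L ∧ ∀ x ∈ Ω, ∀ s t : ℝ≥0, 0 < s → s < t →
    φ x s / (s : ℝ≥0∞) ^ p ≤ (L : ℝ≥0∞) * (φ x t / (t : ℝ≥0∞) ^ p)

/-- The condition `(aDec)_q` on `Ω`: `t ↦ φ(x,t)/t^q` is almost decreasing, uniformly in `x`. -/
def ADec (q : ℝ) (Ω : Set (RSp n)) (φ : RSp n → ℝ≥0 → ℝ≥0∞) : Prop :=
  ∃ L : ℝ≥0, 1 ≤ L ∧ ∀ x ∈ Ω, ∀ s t : ℝ≥0, 0 < s → s < t →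
    φ x t / (t : ℝ≥0∞) ^ q ≤ (L : ℝ≥0∞) * (φ x s / (s : ℝ≥0∞) ^ q)

/-- The condition `(A0)` on `Ω`: `β ≤ φ⁻¹(x,1) ≤ 1/β` for a.e. `x ∈ Ω`. -/
def A0 (Ω : Set (RSp n)) (φ : RSp n → ℝ≥0 → ℝ≥0∞) : Prop :=
  ∃ β : ℝ≥0, 0 < β ∧ β ≤ 1 ∧ ∀ᵐ x ∂(volume.restrict Ω),
    (β : ℝ≥0∞) ≤ phiInv φ x 1 ∧ phiInv φ x 1 ≤ (β : ℝ≥0∞)⁻¹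

/-- The condition `(A1)` (on all of `ℝⁿ`). -/
def A1 (φ : RSp n → ℝ≥0 → ℝ≥0∞) : Prop :=
  ∃ β : ℝ≥0, 0 < β ∧ β < 1 ∧ ∀ Q : Cube n, volume Q.set ≤ 1 →
    ∀ᵐ x ∂(volume.restrict Q.set), ∀ᵐ y ∂(volume.restrict Q.set),
      ∀ t : ℝ≥0∞, 1 ≤ t → t ≤ (volume Q.set)⁻¹ →
        (β : ℝ≥0∞) * phiInv φ x t ≤ phiInv φ y t

/-- The condition `(A2)` (on all of `ℝⁿ`). -/
def A2 (φ : RSp n → ℝ≥0 → ℝ≥0∞) : Prop :=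
  ∃ φi : ℝ≥0 → ℝ≥0∞, IsWeakPhi Set.univ (fun _ : RSp n => φi) ∧
  ∃ h : RSp n → ℝ≥0∞, (∫⁻ x, h x) < ∞ ∧ (∃ M : ℝ≥0, ∀ᵐ x ∂(volume : Measure (RSp n)), h x ≤ M) ∧
  ∃ β : ℝ≥0, 0 < β ∧ β ≤ 1 ∧ ∃ s : ℝ≥0, 0 < s ∧
    ∀ᵐ x ∂(volume : Measure (RSp n)), ∀ t : ℝ≥0,
      (φi t ≤ (s : ℝ≥0∞) → φ x (β * t) ≤ φi t + h x) ∧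
      (φ x t ≤ (s : ℝ≥0∞) → φi (β * t) ≤ φ x t + h x)

/-- Membership in the generalized Orlicz space `L^φ(Ω)`. -/
def MemOrlicz (φ : RSp n → ℝ≥0 → ℝ≥0∞) (Ω : Set (RSp n)) (f : RSp n → ℝ) : Prop :=
  AEMeasurable f (volume.restrict Ω) ∧
  ∃ lam : ℝ≥0, 0 < lam ∧ (∫⁻ x in Ω, φ x (lam * ‖f x‖₊) ∂volume) < ∞

/-- The Luxemburg (quasi)norm of `L^φ(Ω)`. -/
def orliczNorm (φ : RSp n → ℝ≥0 → ℝ≥0∞) (Ω : Set (RSp n)) (f : RSp n → ℝ) : ℝ≥0∞ :=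
  sInf ((fun lam : ℝ≥0 => (lam : ℝ≥0∞)) ''
    {lam : ℝ≥0 | 0 < lam ∧ (∫⁻ x in Ω, φ x (‖f x‖₊ / lam) ∂volume) ≤ 1})

/-- The canonical extension of `φ(x,·)` to `[0,∞]`. -/
def phiE (φ : RSp n → ℝ≥0 → ℝ≥0∞) (x : RSp n) (t : ℝ≥0∞) : ℝ≥0∞ :=
  ⨆ (s : ℝ≥0) (_ : (s : ℝ≥0∞) ≤ t), φ x s

/-- The Luxemburg (quasi)norm for `[0,∞]`-valued functions. -/
def orliczNormE (φ : RSp n → ℝ≥0 → ℝ≥0∞) (Ω : Set (RSp n)) (g : RSp n → ℝ≥0∞) : ℝ≥0∞ :=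
  sInf ((fun lam : ℝ≥0 => (lam : ℝ≥0∞)) ''
    {lam : ℝ≥0 | 0 < lam ∧ (∫⁻ x in Ω, phiE φ x (g x / (lam : ℝ≥0∞)) ∂volume) ≤ 1})

/-- The average `b_Q` of `b` over the cube `Q`. -/
def cubeAvg (Q : Cube n) (b : RSp n → ℝ) : ℝ := ⨍ x in Q.set, b x

/-- The BMO seminorm `‖b‖_*`. -/
def bmoNorm (b : RSp n → ℝ) : ℝ≥0∞ :=
  ⨆ Q : Cube n, (volume Q.set)⁻¹ * ∫⁻ x in Q.set, ‖b x - cubeAvg Q b‖₊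

/-- `b ∈ BMO(ℝⁿ)`. -/
def IsBMO (b : RSp n → ℝ) : Prop := LocallyIntegrable b volume ∧ bmoNorm b < ∞

/-- The non-centred Hardy–Littlewood maximal function (over axes-parallel cubes). -/
def maximal (f : RSp n → ℝ) (x : RSp n) : ℝ≥0∞ :=
  ⨆ (Q : Cube n) (_ : x ∈ Q.set), (volume Q.set)⁻¹ * ∫⁻ y in Q.set, (‖f y‖₊ : ℝ≥0∞) ∂volume

/-- The fractional maximal function `M_α`. -/
def fracMaximal (α : ℝ) (f : RSp n → ℝ) (x : RSp n) : ℝ≥0∞ :=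
  ⨆ (Q : Cube n) (_ : x ∈ Q.set),
    volume Q.set ^ (α / (n : ℝ) - 1) * ∫⁻ y in Q.set, (‖f y‖₊ : ℝ≥0∞) ∂volume

/-- The maximal function restricted to subcubes of `Q₀`. -/
def restMaximal (Q₀ : Cube n) (f : RSp n → ℝ) (x : RSp n) : ℝ≥0∞ :=
  ⨆ (Q : Cube n) (_ : x ∈ Q.set) (_ : Q.set ⊆ Q₀.set),
    (volume Q.set)⁻¹ * ∫⁻ y in Q.set, (‖f y‖₊ : ℝ≥0∞) ∂volume

/-- The fractional maximal function restricted to subcubes of `Q₀`. -/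
def restFracMaximal (α : ℝ) (Q₀ : Cube n) (f : RSp n → ℝ) (x : RSp n) : ℝ≥0∞ :=
  ⨆ (Q : Cube n) (_ : x ∈ Q.set) (_ : Q.set ⊆ Q₀.set),
    volume Q.set ^ (α / (n : ℝ) - 1) * ∫⁻ y in Q.set, (‖f y‖₊ : ℝ≥0∞) ∂volume

/-- The sharp maximal function `M♯`. -/
def sharpMaximal (f : RSp n → ℝ) (x : RSp n) : ℝ≥0∞ :=
  ⨆ (Q : Cube n) (_ : x ∈ Q.set),
    (volume Q.set)⁻¹ * ∫⁻ y in Q.set, (‖f y - ⨍ z in Q.set, f z‖₊ : ℝ≥0∞) ∂volume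

/-- The maximal commutator `M_b`. -/
def maximalComm (b f : RSp n → ℝ) (x : RSp n) : ℝ≥0∞ :=
  ⨆ (Q : Cube n) (_ : x ∈ Q.set),
    (volume Q.set)⁻¹ * ∫⁻ y in Q.set, (‖b x - b y‖₊ : ℝ≥0∞) * (‖f y‖₊ : ℝ≥0∞) ∂volume

/-- The fractional maximal commutator `M_{b,α}`. -/
def fracMaximalComm (α : ℝ) (b f : RSp n → ℝ) (x : RSp n) : ℝ≥0∞ :=
  ⨆ (Q : Cube n) (_ : x ∈ Q.set),
    volume Q.set ^ (α / (n : ℝ) - 1) *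
      ∫⁻ y in Q.set, (‖b x - b y‖₊ : ℝ≥0∞) * (‖f y‖₊ : ℝ≥0∞) ∂volume

/-- The commutator `[M,b]f = M(bf) − b·Mf` of the maximal operator. -/
def maximalCommutator (b f : RSp n → ℝ) (x : RSp n) : ℝ :=
  (maximal (fun y => b y * f y) x).toReal - b x * (maximal f x).toReal

/-- The commutator `[M_α,b]f = M_α(bf) − b·M_α f` of the fractional maximal operator. -/
def fracMaximalCommutator (α : ℝ) (b f : RSp n → ℝ) (x : RSp n) : ℝ :=
  (fracMaximal α (fun y => b y * f y) x).toReal - b x * (fracMaximal α f x).toReal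

/-- The Riesz potential `I_α f`. -/
def riesz (α : ℝ) (f : RSp n → ℝ) (x : RSp n) : ℝ :=
  ∫ y, f y / dist x y ^ ((n : ℝ) - α)

/-- The commutator `[I_α, b]f = I_α(bf) − b·I_α f` of the Riesz potential. -/
def rieszCommutator (α : ℝ) (b f : RSp n → ℝ) (x : RSp n) : ℝ :=
  riesz α (fun y => b y * f y) x - b x * riesz α f x

/-- The operator `I_{b,α} f(x) = ∫ |b(x)−b(y)|·|x−y|^{α−n} f(y) dy`. -/
def rieszAbs (α : ℝ) (b f : RSp n → ℝ) (x : RSp n) : ℝ :=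
  ∫ y, |b x - b y| / dist x y ^ ((n : ℝ) - α) * f y

/-- Equivalence `φ ≃ ψ` of Φ-functions. -/
def PhiEquiv (φ ψ : RSp n → ℝ≥0 → ℝ≥0∞) : Prop :=
  ∃ L : ℝ≥0, 1 ≤ L ∧ ∀ x : RSp n, ∀ t : ℝ≥0, ψ x (t / L) ≤ φ x t ∧ φ x t ≤ ψ x (L * t)

/-- Weak equivalence `φ ∼ ψ` of Φ-functions. -/
def PhiWeakEquiv (φ ψ : RSp n → ℝ≥0 → ℝ≥0∞) : Prop :=
  ∃ L : ℝ≥0, 1 ≤ L ∧ ∃ h : RSp n → ℝ≥0∞, (∫⁻ x, h x) < ∞ ∧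
    ∀ᵐ x ∂(volume : Measure (RSp n)), ∀ t : ℝ≥0,
      ψ x t ≤ φ x (L * t) + h x ∧ φ x t ≤ ψ x (L * t) + h x

/-- The relation `φ⁻¹(x,t) ≈ t^{α/n}·ψ⁻¹(x,t)` with constants independent of `x` and `t > 0`. -/
def FracInvRel (α : ℝ) (φ ψ : RSp n → ℝ≥0 → ℝ≥0∞) : Prop :=
  ∃ c₁ c₂ : ℝ≥0, 0 < c₁ ∧ ∀ x : RSp n, ∀ t : ℝ≥0, 0 < t →
    (c₁ : ℝ≥0∞) * ((t : ℝ≥0∞) ^ (α / (n : ℝ)) * phiInv ψ x t) ≤ phiInv φ x t ∧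
    phiInv φ x t ≤ (c₂ : ℝ≥0∞) * ((t : ℝ≥0∞) ^ (α / (n : ℝ)) * phiInv ψ x t)

/-- The characteristic function of a cube, as a real-valued function. -/
def cubeIndicator (Q : Cube n) : RSp n → ℝ := Q.set.indicator 1

end

section Aux

variable {n : ℕ}

lemma cube_set_eq (Q : Cube n) :
    Q.set = WithLp.ofLp ⁻¹' (Metric.closedBall (WithLp.ofLp Q.c) Q.r) := by
  ext y
  simp only [Cube.set, Set.mem_ofPred_eq, Set.mem_preimage, Metric.mem_closedBall]
  rw [dist_pi_le_iff Q.r_pos.le]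
  simp [Real.dist_eq]

lemma cube_meas (Q : Cube n) : MeasurableSet Q.set := by
  rw [cube_set_eq]
  exact (PiLp.volume_preserving_ofLp (Fin n)).measurable Metric.isClosed_closedBall.measurableSet

lemma cube_vol (Q : Cube n) :
    volume Q.set = ENNReal.ofReal ((2 * Q.r) ^ n) := by
  rw [cube_set_eq, (PiLp.volume_preserving_ofLp (Fin n)).measure_preimage
    Metric.isClosed_closedBall.measurableSet.nullMeasurableSet,
    Real.volume_pi_closedBall _ Q.r_pos.le, Fintype.card_fin]

lemma cube_vol_ne_zero (Q : Cube n) : volume Q.set ≠ 0 := by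
  rw [cube_vol]
  have := Q.r_pos
  simp only [ne_eq, ENNReal.ofReal_eq_zero, not_le]
  positivity

lemma cube_vol_ne_top (Q : Cube n) : volume Q.set ≠ ∞ := by
  rw [cube_vol]; exact ENNReal.ofReal_ne_top

lemma lt_of_lt_phiInv {θ : RSp n → ℝ≥0 → ℝ≥0∞} {x : RSp n} {t : ℝ≥0} {τ : ℝ≥0∞}
    (h : (t : ℝ≥0∞) < phiInv θ x τ) : θ x t < τ := by
  by_contra hc
  have h1 : phiInv θ x τ ≤ t := sInf_le ⟨t, not_lt.mp hc, rfl⟩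
  exact absurd h1 (not_le.mpr h)

lemma le_of_phiInv_lt {θ : RSp n → ℝ≥0 → ℝ≥0∞} (hθ : IsWeakPhi Set.univ θ) {x : RSp n}
    {t : ℝ≥0} {τ : ℝ≥0∞}
    (h : phiInv θ x τ < (t : ℝ≥0∞)) : τ ≤ θ x t := by
  obtain ⟨_, ⟨s, hs, rfl⟩, hst⟩ := sInf_lt_iff.mp h
  have hst' : s < t := ENNReal.coe_lt_coe.mp hst
  exact le_trans hs (hθ.mono x trivial hst'.le)

lemma le_phiInv_of_lt {θ : RSp n → ℝ≥0 → ℝ≥0∞} (hθ : IsWeakPhi Set.univ θ) {x : RSp n}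
    {t : ℝ≥0} {τ : ℝ≥0∞}
    (h : θ x t < τ) : (t : ℝ≥0∞) ≤ phiInv θ x τ := by
  by_contra hc
  exact absurd (le_of_phiInv_lt hθ (not_le.mp hc)) (not_le.mpr h)

lemma phiInv_le {θ : RSp n → ℝ≥0 → ℝ≥0∞} {x : RSp n} {t : ℝ≥0} {τ : ℝ≥0∞}
    (h : τ ≤ θ x t) : phiInv θ x τ ≤ t := sInf_le ⟨t, h, rfl⟩

lemma phiInv_mono (θ : RSp n → ℝ≥0 → ℝ≥0∞) (x : RSp n) {σ τ : ℝ≥0∞} (h : σ ≤ τ) :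
    phiInv θ x σ ≤ phiInv θ x τ := by
  apply sInf_le_sInf
  rintro _ ⟨s, hs, rfl⟩
  exact ⟨s, le_trans h hs, rfl⟩

lemma phiInv_pos {θ : RSp n → ℝ≥0 → ℝ≥0∞} (hθ : IsWeakPhi Set.univ θ) (x : RSp n)
    {τ : ℝ≥0∞} (h : τ ≠ 0) : phiInv θ x τ ≠ 0 := by
  have h1 := (hθ.lim_zero x trivial).eventually (gt_mem_nhds (pos_iff_ne_zero.mpr h))
  have h2 : ∀ᶠ t : ℝ≥0 in nhdsWithin 0 (Set.Ioi 0), 0 < t := self_mem_nhdsWithin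
  obtain ⟨t, ht, ht0⟩ := (h1.and h2).exists
  have := le_phiInv_of_lt hθ ht
  intro h0
  rw [h0] at this
  simp at this
  exact ht0.ne' this

lemma phiInv_ne_top {θ : RSp n → ℝ≥0 → ℝ≥0∞} (hθ : IsWeakPhi Set.univ θ) (x : RSp n)
    {τ : ℝ≥0∞} (h : τ ≠ ∞) : phiInv θ x τ ≠ ∞ := by
  obtain ⟨t, ht⟩ := ((hθ.lim_top x trivial).eventually (lt_mem_nhds h.lt_top)).exists
  exact ne_top_of_le_ne_top ENNReal.coe_ne_top (phiInv_le ht.le)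

/-- The constant of almost-increasingness, in scaling form. -/
def ScaleConst (θ : RSp n → ℝ≥0 → ℝ≥0∞) (L : ℝ≥0) : Prop :=
  1 ≤ L ∧ ∀ x : RSp n, ∀ t m : ℝ≥0, 1 ≤ m → (m : ℝ≥0∞) * θ x t ≤ θ x (L * m * t)

lemma exists_scale {θ : RSp n → ℝ≥0 → ℝ≥0∞} (hθ : IsWeakPhi Set.univ θ) :
    ∃ L, ScaleConst θ L := by
  obtain ⟨L, hL, h⟩ := hθ.almost_inc
  refine ⟨L, hL, fun x t m hm => ?_⟩
  rcases eq_or_ne t 0 with rfl | ht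
  · simp [hθ.zero x trivial]
  have ht' : 0 < t := pos_iff_ne_zero.mpr ht
  have hLm : 1 ≤ L * m := one_le_mul hL hm
  rcases eq_or_lt_of_le hLm with h1 | h1
  · have hm1 : m = 1 := by
      apply le_antisymm _ hm
      calc m = 1 * m := by ring
        _ ≤ L * m := by gcongr
        _ = 1 := h1.symm
    rw [← h1, hm1]; simp
  · have hlt : t < L * m * t := by
      calc t = 1 * t := by ring
        _ < L * m * t := by gcongr
    have := h x trivial t (L * m * t) ht' hlt
    have hL0 : L ≠ 0 := (lt_of_lt_of_le one_pos hL).ne'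
    have hm0 : m ≠ 0 := (lt_of_lt_of_le one_pos hm).ne'
    rw [ENNReal.div_le_iff (by simpa using ht) (by simp)] at this
    calc (m : ℝ≥0∞) * θ x t
        ≤ m * (L * (θ x (L * m * t) / ((L * m * t : ℝ≥0) : ℝ≥0∞)) * t) := by gcongr
      _ = (L * m * t : ℝ≥0) * (θ x (L * m * t) / ((L * m * t : ℝ≥0) : ℝ≥0∞)) := by
          push_cast; ring
      _ = θ x (L * m * t) := by
          apply ENNReal.mul_div_cancel
          · exact_mod_cast mul_ne_zero (mul_ne_zero hL0 hm0) ht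
          · exact ENNReal.coe_ne_top

lemma phiInv_scale {θ : RSp n → ℝ≥0 → ℝ≥0∞} (hθ : IsWeakPhi Set.univ θ) {L : ℝ≥0}
    (hL : ScaleConst θ L) (x : RSp n) {m : ℝ≥0} (hm : 1 ≤ m) (τ : ℝ≥0∞) :
    phiInv θ x (m * τ) ≤ L * m * phiInv θ x τ := by
  have hc0 : (L : ℝ≥0∞) * m ≠ 0 := by
    have := one_le_mul hL.1 hm
    exact_mod_cast (lt_of_lt_of_le one_pos this).ne'
  have hct : (L : ℝ≥0∞) * m ≠ ∞ := by finiteness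
  rw [mul_comm (_ * _ : ℝ≥0∞) (phiInv _ _ _), ← ENNReal.div_le_iff hc0 hct]
  apply le_of_forall_gt_imp_ge_of_dense
  intro a ha
  obtain ⟨t, ht1, ht2⟩ := ENNReal.lt_iff_exists_nnreal_btwn.mp ha
  refine le_trans ?_ ht2.le
  rw [ENNReal.div_le_iff hc0 hct]
  have h1 := le_of_phiInv_lt hθ ht1
  have : (m : ℝ≥0∞) * τ ≤ θ x (L * m * t) := le_trans (by gcongr) (hL.2 x t m hm)
  refine (phiInv_le this).trans ?_
  push_cast
  rw [mul_comm]

/-- Comparison of the inverse at points of a cube. -/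
structure GoodData (Q : Cube n) (K m : ℝ≥0) (y : RSp n) (S : ℝ≥0∞) (H : RSp n → ℝ≥0∞)
    (E : Set (RSp n)) : Prop where
  le_S : (volume Q.set)⁻¹ ≤ S
  S_le : S ≤ m * (volume Q.set)⁻¹
  S_le_H : ∀ x, S ≤ H x
  H_top : ∀ᵐ x ∂(volume.restrict Q.set), H x < ∞
  intH : (∫⁻ x in Q.set, H x) ≤ K
  E_meas : MeasurableSet E
  E_sub : E ⊆ Q.set
  E_vol : volume Q.set ≤ 2 * volume E

/-- The inverse comparison, for a given function. -/
def GoodCmp (θ : RSp n → ℝ≥0 → ℝ≥0∞) (C : ℝ≥0) (Q : Cube n) (y : RSp n) (S : ℝ≥0∞)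
    (H : RSp n → ℝ≥0∞) (E : Set (RSp n)) : Prop :=
  (∀ᵐ x ∂(volume.restrict Q.set), phiInv θ y (H x) ≤ C * phiInv θ x (H x)) ∧
  (∀ᵐ x ∂(volume.restrict E), phiInv θ x S ≤ C * phiInv θ y S)

lemma norm_lower {θ : RSp n → ℝ≥0 → ℝ≥0∞} (hθ : IsWeakPhi Set.univ θ) {L : ℝ≥0}
    (hL : ScaleConst θ L) {K m C : ℝ≥0} (hm : 1 ≤ m) (hC : 1 ≤ C) {Q : Cube n} {y S H E}
    (hd : GoodData Q K m y S H E) (hc : GoodCmp θ C Q y S H E) :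
    1 ≤ ((4 * L * (C * (L * m)) : ℝ≥0) : ℝ≥0∞) * phiInv θ y (volume Q.set)⁻¹ *
      orliczNorm θ Set.univ (cubeIndicator Q) := by
  set D : ℝ≥0 := 4 * L * (C * (L * m)) with hD
  have hL0 : 0 < L := lt_of_lt_of_le one_pos hL.1
  have hm0 : 0 < m := lt_of_lt_of_le one_pos hm
  have hC0 : 0 < C := lt_of_lt_of_le one_pos hC
  have hD0 : 0 < D := by positivity
  set k := phiInv θ y (volume Q.set)⁻¹ with hk
  have hV0 := cube_vol_ne_zero Q
  have hVt := cube_vol_ne_top Q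
  have hk0 : k ≠ 0 := phiInv_pos hθ y (ENNReal.inv_ne_zero.mpr hVt)
  have hkt : k ≠ ∞ := phiInv_ne_top hθ y (ENNReal.inv_ne_top.mpr hV0)
  have hDk0 : (D : ℝ≥0∞) * k ≠ 0 := mul_ne_zero (by exact_mod_cast hD0.ne') hk0
  have hDkt : (D : ℝ≥0∞) * k ≠ ∞ := by finiteness
  rw [mul_comm, ← ENNReal.div_le_iff_le_mul (Or.inl hDk0) (Or.inl hDkt)]
  apply le_sInf
  rintro _ ⟨lam, ⟨hlam, hint⟩, rfl⟩
  rw [ENNReal.div_le_iff_le_mul (Or.inl hDk0) (Or.inl hDkt)]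
  by_contra hcon
  rw [not_le] at hcon
  have hlt : (D : ℝ≥0∞) * k < ((1 / lam : ℝ≥0) : ℝ≥0∞) := by
    rw [ENNReal.coe_div hlam.ne', ENNReal.lt_div_iff_mul_lt (Or.inl (by simpa using hlam.ne')) (Or.inl (by simp))]
    simpa [mul_comm] using hcon
  set t : ℝ≥0 := 1 / lam
  have key : ∀ᵐ x ∂(volume.restrict E), 4 * (volume Q.set)⁻¹ ≤ θ x (‖cubeIndicator Q x‖₊ / lam) := by
    filter_upwards [hc.2, ae_restrict_mem hd.E_meas] with x hx hxE
    have hone : ‖cubeIndicator Q x‖₊ = 1 := by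
      simp [cubeIndicator, Set.indicator_of_mem (hd.E_sub hxE)]
    rw [hone]
    have h1 : phiInv θ x (volume Q.set)⁻¹ ≤ C * (L * m) * k := by
      calc _ ≤ phiInv θ x S := phiInv_mono _ _ hd.le_S
        _ ≤ C * phiInv θ y S := hx
        _ ≤ C * phiInv θ y (m * (volume Q.set)⁻¹) := by
            gcongr; exact phiInv_mono _ _ hd.S_le
        _ ≤ C * (L * m * k) := by
            gcongr; exact phiInv_scale hθ hL y hm _
        _ = _ := by ring
    have h2 : phiInv θ x (volume Q.set)⁻¹ < ((t / (4 * L) : ℝ≥0) : ℝ≥0∞) := by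
      refine h1.trans_lt ?_
      rw [ENNReal.coe_div (by positivity), ENNReal.lt_div_iff_mul_lt (Or.inl (by simpa using hL0.ne')) (Or.inl ENNReal.coe_ne_top)]
      refine lt_of_eq_of_lt ?_ hlt
      rw [hD]; push_cast; ring
    have h3 := le_of_phiInv_lt hθ h2
    have h4 := hL.2 x (t / (4 * L)) 4 (by norm_num)
    have h5 : L * 4 * (t / (4 * L)) = t := by field_simp
    rw [h5] at h4
    refine le_trans ?_ h4
    push_cast
    gcongr
  have : (2 : ℝ≥0∞) ≤ 1 := by
    calc (2 : ℝ≥0∞) = 2 * ((volume Q.set)⁻¹ * volume Q.set) := by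
          rw [ENNReal.inv_mul_cancel hV0 hVt, mul_one]
      _ ≤ 2 * ((volume Q.set)⁻¹ * (2 * volume E)) := by gcongr; exact hd.E_vol
      _ = 4 * (volume Q.set)⁻¹ * volume E := by ring
      _ = ∫⁻ x in E, 4 * (volume Q.set)⁻¹ := by rw [setLIntegral_const]
      _ ≤ ∫⁻ x in E, θ x (‖cubeIndicator Q x‖₊ / lam) := lintegral_mono_ae key
      _ ≤ ∫⁻ x in Set.univ, θ x (‖cubeIndicator Q x‖₊ / lam) := lintegral_mono_set (Set.subset_univ _)
      _ ≤ 1 := hint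
  norm_num at this

lemma norm_upper {θ : RSp n → ℝ≥0 → ℝ≥0∞} (hθ : IsWeakPhi Set.univ θ) {L : ℝ≥0}
    (hL : ScaleConst θ L) {K m C : ℝ≥0} (hK : 1 ≤ K) (hC : 1 ≤ C) {Q : Cube n} {y S H E}
    (hd : GoodData Q K m y S H E) (hc : GoodCmp θ C Q y S H E) :
    phiInv θ y (volume Q.set)⁻¹ *
      orliczNorm θ Set.univ (cubeIndicator Q) ≤ ((C * (L * K) : ℝ≥0) : ℝ≥0∞) := by
  have hL0 : 0 < L := lt_of_lt_of_le one_pos hL.1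
  have hK0 : 0 < K := lt_of_lt_of_le one_pos hK
  have hC0 : 0 < C := lt_of_lt_of_le one_pos hC
  have hCe : (C : ℝ≥0∞) ≠ 0 := by exact_mod_cast hC0.ne'
  set k := phiInv θ y (volume Q.set)⁻¹ with hk
  set N := orliczNorm θ Set.univ (cubeIndicator Q) with hN
  have hLK : ((L * K : ℝ≥0) : ℝ≥0∞) ≠ 0 := by exact_mod_cast (mul_pos hL0 hK0).ne'
  suffices hs : k / C ≤ ((L * K : ℝ≥0) : ℝ≥0∞) / N by
    rw [ENNReal.le_div_iff_mul_le (Or.inr hLK) (Or.inr ENNReal.coe_ne_top)] at hs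
    have : k * N = C * (k / C * N) := by
      rw [← mul_assoc, ENNReal.mul_div_cancel hCe ENNReal.coe_ne_top]
    rw [this, ENNReal.coe_mul C]
    gcongr
  apply ENNReal.le_of_forall_nnreal_lt
  intro t ht
  rcases eq_or_ne t 0 with rfl | ht0
  · simp
  have ht0' : 0 < t := pos_iff_ne_zero.mpr ht0
  rw [ENNReal.lt_div_iff_mul_lt (Or.inl hCe) (Or.inl ENNReal.coe_ne_top)] at ht
  rw [ENNReal.le_div_iff_mul_le (Or.inr hLK) (Or.inr ENNReal.coe_ne_top)]
  have hmem : N ≤ ((L * K / t : ℝ≥0) : ℝ≥0∞) := by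
    apply sInf_le
    refine ⟨_, ⟨by positivity, ?_⟩, rfl⟩
    have heq : ∀ x, θ x (‖cubeIndicator Q x‖₊ / (L * K / t)) =
        Q.set.indicator (fun x => θ x (t / (L * K))) x := by
      intro x
      by_cases hx : x ∈ Q.set
      · simp [cubeIndicator, hx]
      · simp [cubeIndicator, hx, hθ.zero x trivial]
    simp_rw [heq]
    rw [Measure.restrict_univ, lintegral_indicator (cube_meas Q)]
    have key : ∀ᵐ x ∂(volume.restrict Q.set), θ x (t / (L * K)) ≤ (K : ℝ≥0∞)⁻¹ * H x := by
      filter_upwards [hc.1] with x hx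
      have h1 : (t : ℝ≥0∞) < phiInv θ x (H x) := by
        have : (t : ℝ≥0∞) * C < phiInv θ x (H x) * C := by
          calc _ < k := ht
            _ ≤ phiInv θ y (H x) := phiInv_mono _ _ (hd.le_S.trans (hd.S_le_H x))
            _ ≤ _ := hx
            _ = _ := mul_comm _ _
        exact lt_of_mul_lt_mul_right' this
      have h2 := lt_of_lt_phiInv h1
      have h3 := hL.2 x (t / (L * K)) K hK
      have h4 : L * K * (t / (L * K)) = t := by field_simp
      rw [h4] at h3
      rw [mul_comm (_⁻¹), ← div_eq_mul_inv, ENNReal.le_div_iff_mul_le (Or.inl (by simpa using hK0.ne')) (Or.inl ENNReal.coe_ne_top), mul_comm]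
      exact h3.trans h2.le
    calc _ ≤ ∫⁻ x in Q.set, (K : ℝ≥0∞)⁻¹ * H x := lintegral_mono_ae key
      _ = (K : ℝ≥0∞)⁻¹ * ∫⁻ x in Q.set, H x := lintegral_const_mul' _ _ (by simpa using hK0.ne')
      _ ≤ (K : ℝ≥0∞)⁻¹ * K := by gcongr; exact hd.intH
      _ ≤ 1 := ENNReal.inv_mul_le_one _
  calc (t : ℝ≥0∞) * N ≤ t * ((L * K / t : ℝ≥0) : ℝ≥0∞) := by gcongr
    _ = ((t * (L * K / t) : ℝ≥0) : ℝ≥0∞) := by push_cast; rfl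
    _ = ((L * K : ℝ≥0) : ℝ≥0∞) := by congr 1; field_simp
    _ ≤ _ := le_rfl


lemma a2_meas {φ : RSp n → ℝ≥0 → ℝ≥0∞} (hφ : IsWeakPhi Set.univ φ) (ha2 : A2 φ) :
    ∃ φi : ℝ≥0 → ℝ≥0∞, IsWeakPhi Set.univ (fun _ : RSp n => φi) ∧
    ∃ h : RSp n → ℝ≥0∞, Measurable h ∧ (∫⁻ x, h x) < ∞ ∧
      (∃ M : ℝ≥0, ∀ᵐ x ∂(volume : Measure (RSp n)), h x ≤ M) ∧
    ∃ β : ℝ≥0, 0 < β ∧ ∃ s : ℝ≥0, 0 < s ∧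
    ∀ᵐ x ∂(volume : Measure (RSp n)), ∀ t : ℝ≥0,
      (φi t ≤ (s : ℝ≥0∞) → φ x (β * t) ≤ φi t + h x) ∧
      (φ x t ≤ (s : ℝ≥0∞) → φi (β * t) ≤ φ x t + h x) := by
  obtain ⟨φi, hφi, h, hint, ⟨M, hM⟩, β, hβ, -, s, hs, hh⟩ := ha2
  set d : ℕ → ℝ≥0 := TopologicalSpace.denseSeq ℝ≥0 with hd
  have hφm : ∀ t : ℝ≥0, AEMeasurable (fun x => φ x t) volume := by
    intro t
    have := hφ.meas (fun _ => t) measurable_const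
    rwa [Measure.restrict_univ] at this
  let g : RSp n → ℝ≥0∞ := fun x => ⨆ k : ℕ,
    (if φi (d k) ≤ s then φ x (β * d k) - φi (d k) else 0) ⊔
    (if φ x (d k) ≤ s then φi (β * d k) - φ x (d k) else 0)
  have hg : AEMeasurable g volume := by
    apply AEMeasurable.iSup
    intro k
    apply AEMeasurable.sup
    · split_ifs
      · exact (hφm _).sub aemeasurable_const
      · exact aemeasurable_const
    · have : Measurable (fun u : ℝ≥0∞ => if u ≤ s then φi (β * d k) - u else 0) :=
        Measurable.ite measurableSet_Iic (measurable_const.sub measurable_id) measurable_const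
      exact this.comp_aemeasurable (hφm (d k))
  have hgh : ∀ᵐ x ∂(volume : Measure (RSp n)), g x ≤ h x := by
    filter_upwards [hh] with x hx
    apply iSup_le
    intro k
    apply sup_le
    · split_ifs with hc
      · exact tsub_le_iff_left.mpr ((hx (d k)).1 hc)
      · exact zero_le
    · split_ifs with hc
      · exact tsub_le_iff_left.mpr ((hx (d k)).2 hc)
      · exact zero_le
  have hmk : ∀ᵐ x ∂(volume : Measure (RSp n)), g x = hg.mk g x := hg.ae_eq_mk
  refine ⟨φi, hφi, hg.mk g, hg.measurable_mk, ?_, ⟨M, ?_⟩, β / 2, by positivity, s, hs, ?_⟩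
  · rw [← lintegral_congr_ae hmk]
    exact (lintegral_mono_ae hgh).trans_lt hint
  · filter_upwards [hM, hgh, hmk] with x h1 h2 h3
    rw [← h3]; exact h2.trans h1
  · filter_upwards [hmk] with x hx t
    rw [← hx]
    rcases eq_or_ne t 0 with rfl | ht
    · have h1 : φi 0 = 0 := hφi.zero x trivial
      simp [hφ.zero x trivial, h1]
    have ht0 : 0 < t := pos_iff_ne_zero.mpr ht
    have hlt : t / 2 < t := NNReal.half_lt_self ht
    obtain ⟨u, ⟨hu1, hu2⟩, k, hk⟩ := (TopologicalSpace.denseRange_denseSeq ℝ≥0).exists_mem_open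
      isOpen_Ioo (Set.nonempty_Ioo.mpr hlt) |>.imp (fun k hk => (⟨hk, k, rfl⟩ :
        d k ∈ Set.Ioo (t / 2) t ∧ ∃ j, d j = d k)) |> fun ⟨k, hk⟩ => (⟨d k, hk⟩ :
        ∃ u, u ∈ Set.Ioo (t / 2) t ∧ ∃ j, d j = u)
    have hβ2 : β / 2 * t ≤ β * d k := by
      rw [hk]
      calc β / 2 * t = β * (t / 2) := by ring
        _ ≤ β * u := by gcongr
    have hgk := le_iSup (fun k : ℕ =>
      (if φi (d k) ≤ s then φ x (β * d k) - φi (d k) else 0) ⊔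
      (if φ x (d k) ≤ s then φi (β * d k) - φ x (d k) else 0)) k
    have hdt : d k ≤ t := by rw [hk]; exact hu2.le
    have m1 : φi (d k) ≤ φi t := hφi.mono x trivial hdt
    have m2 : φ x (d k) ≤ φ x t := hφ.mono x trivial hdt
    constructor
    · intro hc
      have h1 := le_trans le_sup_left hgk
      rw [if_pos (m1.trans hc)] at h1
      calc φ x (β / 2 * t) ≤ φ x (β * d k) := hφ.mono x trivial hβ2
        _ ≤ φi (d k) + (φ x (β * d k) - φi (d k)) := le_add_tsub
        _ ≤ φi t + g x := add_le_add m1 h1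
    · intro hc
      have h1 := le_trans le_sup_right hgk
      rw [if_pos (m2.trans hc)] at h1
      calc φi (β / 2 * t) ≤ φi (β * d k) := hφi.mono x trivial hβ2
        _ ≤ φ x (d k) + (φi (β * d k) - φ x (d k)) := le_add_tsub
        _ ≤ φ x t + g x := add_le_add m2 h1

/-- One-sided comparison of inverses. -/
lemma inv_step {θ η : RSp n → ℝ≥0 → ℝ≥0∞} (hη : IsWeakPhi Set.univ η)
    {Lη : ℝ≥0} (hLη : ScaleConst η Lη) {x : RSp n} {β s : ℝ≥0} (hβ : 0 < β) {b τ : ℝ≥0∞}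
    (h : ∀ t : ℝ≥0, θ x t ≤ (s : ℝ≥0∞) → η x (β * t) ≤ θ x t + b)
    (hb : b ≤ τ) (hτ : τ ≤ s) :
    phiInv θ x τ ≤ ((β⁻¹ * (Lη * 2) : ℝ≥0) : ℝ≥0∞) * phiInv η x τ := by
  apply ENNReal.le_of_forall_nnreal_lt
  intro t ht
  have h1 := lt_of_lt_phiInv ht
  have hbt : b ≠ ∞ := ne_top_of_le_ne_top ENNReal.coe_ne_top (hb.trans hτ)
  have h2 : η x (β * t) < (2 : ℝ≥0) * τ := by
    calc η x (β * t) ≤ θ x t + b := h t (h1.le.trans hτ)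
      _ < τ + τ := ENNReal.add_lt_add_of_lt_of_le hbt h1 hb
      _ = _ := by push_cast; ring
  have h3 := (le_phiInv_of_lt hη h2).trans (phiInv_scale hη hLη x (m := 2) (by norm_num) τ)
  calc (t : ℝ≥0∞) = ((β⁻¹ * (β * t) : ℝ≥0) : ℝ≥0∞) := by congr 1; field_simp
    _ = (β⁻¹ : ℝ≥0) * ((β * t : ℝ≥0) : ℝ≥0∞) := by push_cast; rfl
    _ ≤ (β⁻¹ : ℝ≥0) * (Lη * (2 : ℝ≥0) * phiInv η x τ) := by gcongr
    _ = _ := by push_cast; ring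

lemma cmp_a2 {φ : RSp n → ℝ≥0 → ℝ≥0∞} (hφ : IsWeakPhi Set.univ φ) (ha0 : A0 Set.univ φ)
    (ha2 : A2 φ) :
    ∃ h : RSp n → ℝ≥0∞, Measurable h ∧ (∫⁻ x, h x) < ∞ ∧
      (∃ M : ℝ≥0, ∀ᵐ x ∂(volume : Measure (RSp n)), h x ≤ M) ∧
      ∀ B : ℝ≥0, ∃ C : ℝ≥0, 1 ≤ C ∧ ∃ P : RSp n → Prop,
        (∀ᵐ x ∂(volume : Measure (RSp n)), P x) ∧
        ∀ x y, P x → P y → ∀ τ : ℝ≥0∞, h x ≤ τ → h y ≤ τ → τ ≤ B →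
          phiInv φ x τ ≤ C * phiInv φ y τ := by
  obtain ⟨φi, hφi, h, hm, hint, hM, β, hβ, s, hs, hh⟩ := a2_meas hφ ha2
  obtain ⟨b, hb, -, h0⟩ := ha0
  rw [Measure.restrict_univ] at h0
  obtain ⟨L, hL⟩ := exists_scale hφ
  obtain ⟨Li, hLi⟩ := exists_scale hφi
  refine ⟨h, hm, hint, hM, fun B => ?_⟩
  set B' : ℝ≥0 := max 1 B with hB'
  set s' : ℝ≥0 := max 1 s⁻¹ with hs'
  set C1 : ℝ≥0 := (β⁻¹ * (Li * 2)) * (β⁻¹ * (L * 2)) with hC1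
  set C2 : ℝ≥0 := (L * B' * b⁻¹) * (b⁻¹ * (L * s')) with hC2
  refine ⟨max 1 (max C1 C2), le_max_left _ _, _, hh.and h0, ?_⟩
  rintro x y ⟨hx, hx0⟩ ⟨hy, hy0⟩ τ hxτ hyτ hτB
  rcases le_total τ s with hτ | hτ
  · have e1 := inv_step (θ := φ) (η := fun _ => φi) hφi hLi hβ (fun t => (hx t).2) hxτ hτ
    have e2 := inv_step (θ := fun _ => φi) (η := φ) hφ hL hβ (fun t => (hy t).1) hyτ hτ
    have e3 : phiInv (fun _ : RSp n => φi) x τ = phiInv (fun _ : RSp n => φi) y τ := rfl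
    calc phiInv φ x τ ≤ ((β⁻¹ * (Li * 2) : ℝ≥0) : ℝ≥0∞) * (((β⁻¹ * (L * 2) : ℝ≥0) : ℝ≥0∞) *
            phiInv φ y τ) := by
          refine e1.trans ?_
          rw [e3]
          gcongr
      _ = (C1 : ℝ≥0∞) * phiInv φ y τ := by rw [hC1]; push_cast; ring
      _ ≤ _ := by
          gcongr
          exact (le_max_left _ _).trans (le_max_right _ _)
  · have e1 : phiInv φ x τ ≤ L * B' * (b : ℝ≥0∞)⁻¹ := by
      calc phiInv φ x τ ≤ phiInv φ x (B' * 1) := by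
            apply phiInv_mono
            rw [mul_one]
            exact hτB.trans (by exact_mod_cast le_max_right _ _)
        _ ≤ L * B' * phiInv φ x 1 := phiInv_scale hφ hL x (le_max_left _ _) 1
        _ ≤ _ := by gcongr; exact hx0.2
    have e2 : (b : ℝ≥0∞) ≤ L * s' * phiInv φ y τ := by
      calc (b : ℝ≥0∞) ≤ phiInv φ y 1 := hy0.1
        _ ≤ phiInv φ y (s' * s) := by
            apply phiInv_mono
            have : (1 : ℝ≥0) ≤ s' * s := by
              calc (1 : ℝ≥0) = s⁻¹ * s := by field_simp
                _ ≤ s' * s := by gcongr; exact le_max_right _ _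
            exact_mod_cast this
        _ ≤ L * s' * phiInv φ y s := phiInv_scale hφ hL y (le_max_left _ _) _
        _ ≤ _ := by gcongr; exact phiInv_mono _ _ hτ
    have hb0 : (b : ℝ≥0∞) ≠ 0 := by exact_mod_cast hb.ne'
    calc phiInv φ x τ ≤ L * B' * (b : ℝ≥0∞)⁻¹ * 1 := by rw [mul_one]; exact e1
      _ = L * B' * (b : ℝ≥0∞)⁻¹ * ((b : ℝ≥0∞)⁻¹ * b) := by
          rw [ENNReal.inv_mul_cancel hb0 ENNReal.coe_ne_top]
      _ ≤ L * B' * (b : ℝ≥0∞)⁻¹ * ((b : ℝ≥0∞)⁻¹ * (L * s' * phiInv φ y τ)) := by gcongr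
      _ = (C2 : ℝ≥0∞) * phiInv φ y τ := by
          rw [hC2]; push_cast [ENNReal.coe_inv hb.ne']; ring
      _ ≤ _ := by
          gcongr
          exact (le_max_right _ _).trans (le_max_right _ _)

lemma good_small {φ : RSp n → ℝ≥0 → ℝ≥0∞} (ha1 : A1 φ) :
    ∃ C : ℝ≥0, 1 ≤ C ∧ ∀ Q : Cube n, volume Q.set ≤ 1 → ∃ y S H E,
      GoodData Q 1 1 y S H E ∧ GoodCmp φ C Q y S H E := by
  obtain ⟨β, hβ, hβ1, hA⟩ := ha1
  refine ⟨β⁻¹, (one_le_inv₀ hβ).mpr hβ1.le, fun Q hQ => ?_⟩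
  have hV0 := cube_vol_ne_zero Q
  have hVt := cube_vol_ne_top Q
  set T := (volume Q.set)⁻¹ with hT
  have h1T : 1 ≤ T := ENNReal.one_le_inv.mpr hQ
  set e := essInf (fun x => phiInv φ x T) (volume.restrict Q.set) with he
  have h1 : ∀ᵐ x ∂(volume.restrict Q.set), e ≤ phiInv φ x T := ae_essInf_le
  have h2 : ∀ᵐ x ∂(volume.restrict Q.set), phiInv φ x T ≤ (β⁻¹ : ℝ≥0) * e := by
    filter_upwards [hA Q hQ] with x hx
    have : (β : ℝ≥0∞) * phiInv φ x T ≤ e := by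
      refine le_essInf_of_ae_le _ ?_
      filter_upwards [hx] with y hy
      exact hy T h1T le_rfl
    have hβ0 : (β : ℝ≥0∞) ≠ 0 := by exact_mod_cast hβ.ne'
    calc phiInv φ x T = (β⁻¹ : ℝ≥0) * ((β : ℝ≥0∞) * phiInv φ x T) := by
          rw [← mul_assoc, ENNReal.coe_inv hβ.ne', ENNReal.inv_mul_cancel hβ0 ENNReal.coe_ne_top,
            one_mul]
      _ ≤ _ := by gcongr
  have : (ae (volume.restrict Q.set)).NeBot := by
    rw [ae_neBot]
    intro h0
    exact hV0 (Measure.restrict_eq_zero.mp h0)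
  obtain ⟨y, hy1, hy2⟩ := (h1.and h2).exists
  refine ⟨y, T, fun _ => T, Q.set, ⟨le_rfl, by rw [ENNReal.coe_one, one_mul], fun _ => le_rfl, ?_, ?_, cube_meas Q,
    subset_rfl, ?_⟩, ?_, ?_⟩
  · exact ae_of_all _ fun _ => ENNReal.inv_lt_top.mpr (pos_iff_ne_zero.mpr hV0)
  · rw [setLIntegral_const]
    exact (ENNReal.inv_mul_le_one _).trans (by simp)
  · rw [two_mul]; exact le_self_add
  · filter_upwards [h1] with x hx
    exact hy2.trans (by gcongr)
  · filter_upwards [h2] with x hx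
    exact hx.trans (by gcongr)

lemma good_large {φ : RSp n → ℝ≥0 → ℝ≥0∞} (hφ : IsWeakPhi Set.univ φ) (ha0 : A0 Set.univ φ)
    (ha2 : A2 φ) :
    ∃ K m C : ℝ≥0, 1 ≤ K ∧ 1 ≤ m ∧ 1 ≤ C ∧ ∀ Q : Cube n, 1 ≤ volume Q.set → ∃ y S H E,
      GoodData Q K m y S H E ∧ GoodCmp φ C Q y S H E := by
  obtain ⟨h, hm, hint, ⟨M, hM⟩, hcmp⟩ := cmp_a2 hφ ha0 ha2
  obtain ⟨I, hI⟩ : ∃ I : ℝ≥0, (I : ℝ≥0∞) = ∫⁻ x, h x :=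
    ⟨_, ENNReal.coe_toNNReal hint.ne⟩
  set m : ℝ≥0 := max 1 (2 * I) with hmdef
  have hm1 : 1 ≤ m := le_max_left _ _
  have hm0 : m ≠ 0 := (lt_of_lt_of_le one_pos hm1).ne'
  obtain ⟨C, hC, P, hP, hPc⟩ := hcmp (max m M)
  refine ⟨m + I, m, C, hm1.trans le_self_add, hm1, hC, fun Q hQ => ?_⟩
  have hV0 := cube_vol_ne_zero Q
  have hVt := cube_vol_ne_top Q
  set V := volume Q.set with hV
  set S : ℝ≥0∞ := m * V⁻¹ with hS
  have hT1 : V⁻¹ ≤ 1 := ENNReal.inv_le_one.mpr hQ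
  have hSm : S ≤ m := by
    calc S ≤ m * 1 := mul_le_mul' le_rfl hT1
      _ = m := mul_one _
  have hSV : S * V = m := by
    rw [hS, mul_assoc, ENNReal.inv_mul_cancel hV0 hVt, mul_one]
  have hSt : S ≠ ∞ := ne_top_of_le_ne_top ENNReal.coe_ne_top hSm
  have hbad : 2 * volume {x | S ≤ h x} ≤ V := by
    have h1 := mul_meas_ge_le_lintegral (μ := volume) hm S
    rw [← hI] at h1
    have h2 : (m : ℝ≥0∞) * (2 * volume {x | S ≤ h x}) ≤ m * V := by
      calc (m : ℝ≥0∞) * (2 * volume {x | S ≤ h x}) = 2 * (S * volume {x | S ≤ h x}) * V := by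
            rw [← hSV]; ring
        _ ≤ 2 * I * V := by gcongr
        _ ≤ m * V := by
            gcongr
            exact_mod_cast le_max_right _ _
    exact (ENNReal.mul_le_mul_iff_right (by exact_mod_cast hm0) ENNReal.coe_ne_top).mp h2
  set E := Q.set ∩ {x | h x < S} with hE
  have hEm : MeasurableSet E := (cube_meas Q).inter (measurableSet_lt hm measurable_const)
  have hEV : V ≤ 2 * volume E := by
    have h1 : V ≤ volume E + volume {x | S ≤ h x} := by
      refine (measure_mono ?_).trans (measure_union_le _ _)
      intro x hx
      by_cases hxs : h x < S
      · exact Or.inl ⟨hx, hxs⟩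
      · exact Or.inr (not_lt.mp hxs)
    have h2 : V + V ≤ 2 * volume E + V := by
      calc V + V = 2 * V := by ring
        _ ≤ 2 * (volume E + volume {x | S ≤ h x}) := by gcongr
        _ = 2 * volume E + 2 * volume {x | S ≤ h x} := by ring
        _ ≤ _ := by gcongr
    exact (ENNReal.add_le_add_iff_right hVt).mp h2
  have : (ae (volume.restrict E)).NeBot := by
    rw [ae_neBot]
    intro h0
    rw [Measure.restrict_eq_zero.mp h0] at hEV
    simp at hEV
    exact hV0 hEV
  obtain ⟨y, hyP, hyE⟩ := ((ae_restrict_of_ae (s := E) hP).and (ae_restrict_mem hEm)).exists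
  have hyS : h y < S := hyE.2
  refine ⟨y, S, fun x => max S (h x), E, ⟨?_, le_rfl, fun x => le_max_left _ _, ?_, ?_, hEm,
    Set.inter_subset_left, hEV⟩, ?_, ?_⟩
  · calc V⁻¹ = 1 * V⁻¹ := (one_mul _).symm
      _ ≤ m * V⁻¹ := by gcongr; exact_mod_cast hm1
  · filter_upwards [ae_restrict_of_ae hM] with x hx
    exact max_lt hSt.lt_top (hx.trans_lt ENNReal.coe_lt_top)
  · calc ∫⁻ x in Q.set, max S (h x) ≤ ∫⁻ x in Q.set, (S + h x) :=
          lintegral_mono fun x => max_le le_self_add le_add_self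
      _ = S * V + ∫⁻ x in Q.set, h x := by
          rw [lintegral_add_left measurable_const, setLIntegral_const]
      _ ≤ m + I := by
          rw [hSV, hI]
          gcongr
          exact Measure.restrict_le_self
      _ = _ := by push_cast; rfl
  · filter_upwards [ae_restrict_of_ae hM, ae_restrict_of_ae hP] with x hx hxP
    refine hPc y x hyP hxP _ (hyS.le.trans (le_max_left _ _)) (le_max_right _ _) ?_
    apply max_le
    · exact hSm.trans (by exact_mod_cast le_max_left _ _)
    · exact hx.trans (by exact_mod_cast le_max_right _ _)
  · filter_upwards [ae_restrict_of_ae hP, ae_restrict_mem hEm] with x hxP hxE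
    exact hPc x y hxP hyP _ (le_of_lt hxE.2) hyS.le (hSm.trans (by exact_mod_cast le_max_left _ _))

lemma good_exists {φ : RSp n → ℝ≥0 → ℝ≥0∞} (hφ : IsWeakPhi Set.univ φ) (ha0 : A0 Set.univ φ)
    (ha1 : A1 φ) (ha2 : A2 φ) :
    ∃ K m C : ℝ≥0, 1 ≤ K ∧ 1 ≤ m ∧ 1 ≤ C ∧ ∀ Q : Cube n, ∃ y S H E,
      GoodData Q K m y S H E ∧ GoodCmp φ C Q y S H E := by
  obtain ⟨C', hC', hsmall⟩ := good_small ha1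
  obtain ⟨K, m, C, hK, hm, hC, hlarge⟩ := good_large hφ ha0 ha2
  refine ⟨K, m, max C C', hK, hm, hC.trans (le_max_left _ _), fun Q => ?_⟩
  rcases le_total (volume Q.set) 1 with hQ | hQ
  · obtain ⟨y, S, H, E, hd, hc⟩ := hsmall Q hQ
    refine ⟨y, S, H, E, ⟨hd.le_S, hd.S_le.trans ?_, hd.S_le_H, hd.H_top, hd.intH.trans ?_,
      hd.E_meas, hd.E_sub, hd.E_vol⟩, ?_, ?_⟩
    · gcongr
    · exact_mod_cast hK
    · filter_upwards [hc.1] with x hx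
      exact hx.trans (by gcongr; exact le_max_right _ _)
    · filter_upwards [hc.2] with x hx
      exact hx.trans (by gcongr; exact le_max_right _ _)
  · obtain ⟨y, S, H, E, hd, hc⟩ := hlarge Q hQ
    refine ⟨y, S, H, E, hd, ?_, ?_⟩
    · filter_upwards [hc.1] with x hx
      exact hx.trans (by gcongr; exact le_max_left _ _)
    · filter_upwards [hc.2] with x hx
      exact hx.trans (by gcongr; exact le_max_left _ _)

lemma cmp_transfer {a : ℝ} {φ ψ : RSp n → ℝ≥0 → ℝ≥0∞} {c₁ c₂ C : ℝ≥0} (hc₁ : 0 < c₁)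
    (hrel : ∀ x : RSp n, ∀ t : ℝ≥0, 0 < t →
      (c₁ : ℝ≥0∞) * ((t : ℝ≥0∞) ^ a * phiInv ψ x t) ≤ phiInv φ x t ∧
      phiInv φ x t ≤ (c₂ : ℝ≥0∞) * ((t : ℝ≥0∞) ^ a * phiInv ψ x t))
    {x y : RSp n} {τ : ℝ≥0∞} (h0 : τ ≠ 0) (ht : τ ≠ ∞) (h : phiInv φ x τ ≤ C * phiInv φ y τ) :
    phiInv ψ x τ ≤ ((max 1 (c₁⁻¹ * C * c₂) : ℝ≥0) : ℝ≥0∞) * phiInv ψ y τ := by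
  lift τ to ℝ≥0 using ht
  have hτ : 0 < τ := pos_iff_ne_zero.mpr (by exact_mod_cast h0)
  have h1 := (hrel x τ hτ).1
  have h2 := (hrel y τ hτ).2
  have hc : (c₁ : ℝ≥0∞) * (τ : ℝ≥0∞) ^ a ≠ 0 :=
    mul_ne_zero (by exact_mod_cast hc₁.ne') (ENNReal.rpow_pos (by exact_mod_cast hτ) ENNReal.coe_ne_top).ne'
  have hct : (c₁ : ℝ≥0∞) * (τ : ℝ≥0∞) ^ a ≠ ∞ :=
    ENNReal.mul_ne_top ENNReal.coe_ne_top (ENNReal.rpow_ne_top_of_ne_zero (by exact_mod_cast hτ.ne') ENNReal.coe_ne_top)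
  rw [← ENNReal.mul_le_mul_iff_right hc hct]
  have hcc : (c₁ : ℝ≥0∞) * ((c₁⁻¹ : ℝ≥0) : ℝ≥0∞) = 1 := by
    rw [← ENNReal.coe_mul, mul_inv_cancel₀ hc₁.ne']; rfl
  calc (c₁ : ℝ≥0∞) * (τ : ℝ≥0∞) ^ a * phiInv ψ x τ = (c₁ : ℝ≥0∞) * ((τ : ℝ≥0∞) ^ a * phiInv ψ x τ) := by ring
    _ ≤ C * (c₂ * ((τ : ℝ≥0∞) ^ a * phiInv ψ y τ)) := by
        refine h1.trans (h.trans ?_); gcongr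
    _ = ((c₁ : ℝ≥0∞) * ((c₁⁻¹ : ℝ≥0) : ℝ≥0∞)) * (C * (c₂ * ((τ : ℝ≥0∞) ^ a * phiInv ψ y τ))) := by
        rw [hcc, one_mul]
    _ = (c₁ : ℝ≥0∞) * (τ : ℝ≥0∞) ^ a * (((c₁⁻¹ * C * c₂ : ℝ≥0) : ℝ≥0∞) * phiInv ψ y τ) := by
        push_cast; ring
    _ ≤ _ := by gcongr; exact le_max_right _ _

/-- Final algebra: two-sided bounds for norms through the inverses. -/
lemma final_algebra {W k l N P : ℝ≥0∞} {D D' c : ℝ≥0} (hW0 : W ≠ 0) (hWt : W ≠ ∞)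
    (hl : c * (W⁻¹ * l) ≤ k)
    (hup : k * N ≤ D) (hlow : 1 ≤ D' * l * P) (hc : 0 < c) :
    N ≤ ((c⁻¹ * D * D' : ℝ≥0) : ℝ≥0∞) * (W * P) := by
  have hcc : ((c⁻¹ : ℝ≥0) : ℝ≥0∞) * (c : ℝ≥0∞) = 1 := by
    rw [← ENNReal.coe_mul, inv_mul_cancel₀ hc.ne']; rfl
  have hWW : W⁻¹ * W = 1 := ENNReal.inv_mul_cancel hW0 hWt
  calc N ≤ (D' * l * P) * N := by
        calc N = 1 * N := (one_mul _).symm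
          _ ≤ _ := by gcongr
    _ = ((c⁻¹ : ℝ≥0) * (c : ℝ≥0∞)) * (W⁻¹ * W) * ((D' * l * P) * N) := by
        rw [hcc, hWW, one_mul, one_mul]
    _ = (c⁻¹ : ℝ≥0) * D' * (W * P) * ((c * (W⁻¹ * l)) * N) := by ring
    _ ≤ (c⁻¹ : ℝ≥0) * D' * (W * P) * (k * N) := by gcongr
    _ ≤ (c⁻¹ : ℝ≥0) * D' * (W * P) * D := by gcongr
    _ = _ := by push_cast; ring

end Aux


/-- `‖χ_Q‖_φ ≈ |Q|^{α/n}·‖χ_Q‖_ψ` with constants independent of the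
cube `Q`, under the fractional assumptions. -/
theorem statement15 {n : ℕ} (hn : 0 < n) (p q α r : ℝ)
    (φ ψ : RSp n → ℝ≥0 → ℝ≥0∞)
    (hp : 1 < p) (hpq : p ≤ q) (hα : α / (n : ℝ) = 1 / p - 1 / q)
    (hφ : IsWeakPhi Set.univ φ) (hψ : IsWeakPhi Set.univ ψ)
    (hinv : FracInvRel α φ ψ)
    (hr₁ : α / (n : ℝ) < r) (hr₂ : r ≤ 1 / p)
    (ha0 : A0 Set.univ φ) (ha1 : A1 φ) (ha2 : A2 φ)
    (hainc : AInc p Set.univ φ) (hadec : ADec (1 / r) Set.univ φ) :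
    ∃ c₁ c₂ : ℝ≥0, 0 < c₁ ∧ ∀ Q : Cube n,
      (c₁ : ℝ≥0∞) * (volume Q.set ^ (α / (n : ℝ)) *
          orliczNorm ψ Set.univ (cubeIndicator Q)) ≤
        orliczNorm φ Set.univ (cubeIndicator Q) ∧
      orliczNorm φ Set.univ (cubeIndicator Q) ≤
        (c₂ : ℝ≥0∞) * (volume Q.set ^ (α / (n : ℝ)) *
          orliczNorm ψ Set.univ (cubeIndicator Q)) := by
  obtain ⟨d₁, d₂, hd₁, hrel⟩ := hinv
  obtain ⟨K, m, C, hK, hm, hC, hgood⟩ := good_exists hφ ha0 ha1 ha2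
  obtain ⟨L, hL⟩ := exists_scale hφ
  obtain ⟨L', hL'⟩ := exists_scale hψ
  set C' : ℝ≥0 := max 1 (d₁⁻¹ * C * d₂) with hC'
  have hC'1 : 1 ≤ C' := le_max_left _ _
  set A : ℝ≥0 := 4 * L * (C * (L * m))
  set A' : ℝ≥0 := 4 * L' * (C' * (L' * m))
  set B : ℝ≥0 := C * (L * K)
  set B' : ℝ≥0 := C' * (L' * K)
  set d : ℝ≥0 := d₂ + 1
  have hL0 : 0 < L := lt_of_lt_of_le one_pos hL.1
  have hL'0 : 0 < L' := lt_of_lt_of_le one_pos hL'.1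
  have hm0 : 0 < m := lt_of_lt_of_le one_pos hm
  have hC0 : 0 < C := lt_of_lt_of_le one_pos hC
  have hC'0 : 0 < C' := lt_of_lt_of_le one_pos hC'1
  have hK0 : 0 < K := lt_of_lt_of_le one_pos hK
  have hcst : 0 < d * B' * A := by positivity
  refine ⟨(d * B' * A)⁻¹, d₁⁻¹ * B * A', inv_pos.mpr hcst, fun Q => ?_⟩
  obtain ⟨y, S, H, E, hd, hc⟩ := hgood Q
  have hV0 := cube_vol_ne_zero Q
  have hVt := cube_vol_ne_top Q
  have hT0 : (volume Q.set)⁻¹ ≠ 0 := ENNReal.inv_ne_zero.mpr hVt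
  have hTt : (volume Q.set)⁻¹ ≠ ∞ := ENNReal.inv_ne_top.mpr hV0
  have hS0 : S ≠ 0 := fun h => hT0 (le_antisymm (h ▸ hd.le_S) zero_le)
  have hSt : S ≠ ∞ := ne_top_of_le_ne_top (ENNReal.mul_ne_top ENNReal.coe_ne_top hTt) hd.S_le
  have hc' : GoodCmp ψ C' Q y S H E := by
    refine ⟨?_, ?_⟩
    · filter_upwards [hc.1, hd.H_top] with x hx hxt
      exact cmp_transfer hd₁ hrel
        (fun h => hS0 (le_antisymm (h ▸ hd.S_le_H x) zero_le)) hxt.ne hx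
    · filter_upwards [hc.2] with x hx
      exact cmp_transfer hd₁ hrel hS0 hSt hx
  have l1 := norm_lower hφ hL hm hC hd hc
  have l2 := norm_lower hψ hL' hm hC'1 hd hc'
  have u1 := norm_upper hφ hL hK hC hd hc
  have u2 := norm_upper hψ hL' hK hC'1 hd hc'
  set N := orliczNorm φ Set.univ (cubeIndicator Q)
  set P := orliczNorm ψ Set.univ (cubeIndicator Q)
  set W := volume Q.set ^ (α / (n : ℝ)) with hW
  have hW0 : W ≠ 0 := (ENNReal.rpow_pos (pos_iff_ne_zero.mpr hV0) hVt).ne'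
  have hWt : W ≠ ∞ := ENNReal.rpow_ne_top_of_ne_zero hV0 hVt
  have hk0 : phiInv φ y (volume Q.set)⁻¹ ≠ 0 := phiInv_pos hφ y hT0
  have hl0 : phiInv ψ y (volume Q.set)⁻¹ ≠ 0 := phiInv_pos hψ y hT0
  have hr := hrel y (volume Q.set)⁻¹.toNNReal (ENNReal.toNNReal_pos hT0 hTt)
  rw [ENNReal.coe_toNNReal hTt, ENNReal.inv_rpow, ← hW] at hr
  set k := phiInv φ y (volume Q.set)⁻¹
  set l := phiInv ψ y (volume Q.set)⁻¹
  refine ⟨?_, final_algebra hW0 hWt hr.1 u1 l2 hd₁⟩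
  have hd0 : 0 < d := by positivity
  have hr2 : ((d⁻¹ : ℝ≥0) : ℝ≥0∞) * ((W⁻¹)⁻¹ * k) ≤ l := by
    have hcc : ((d⁻¹ : ℝ≥0) : ℝ≥0∞) * (d : ℝ≥0∞) = 1 := by
      rw [← ENNReal.coe_mul, inv_mul_cancel₀ hd0.ne']; rfl
    calc ((d⁻¹ : ℝ≥0) : ℝ≥0∞) * ((W⁻¹)⁻¹ * k) ≤ ((d⁻¹ : ℝ≥0) : ℝ≥0∞) * (W * (d * (W⁻¹ * l))) := by
          rw [inv_inv]
          gcongr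
          refine hr.2.trans ?_
          gcongr
          exact le_self_add
      _ = (((d⁻¹ : ℝ≥0) : ℝ≥0∞) * (d : ℝ≥0∞)) * (W * W⁻¹) * l := by ring
      _ = l := by rw [hcc, ENNReal.mul_inv_cancel hW0 hWt, one_mul, one_mul]
  have f := final_algebra (ENNReal.inv_ne_zero.mpr hWt) (ENNReal.inv_ne_top.mpr hW0) hr2 u2 l1
    (inv_pos.mpr hd0)
  rw [inv_inv] at f
  have hcc : (((d * B' * A)⁻¹ : ℝ≥0) : ℝ≥0∞) * ((d * B' * A : ℝ≥0) : ℝ≥0∞) = 1 := by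
    rw [← ENNReal.coe_mul, inv_mul_cancel₀ hcst.ne']; rfl
  calc (((d * B' * A)⁻¹ : ℝ≥0) : ℝ≥0∞) * (W * P)
      ≤ (((d * B' * A)⁻¹ : ℝ≥0) : ℝ≥0∞) * (W * (((d * B' * A : ℝ≥0) : ℝ≥0∞) * (W⁻¹ * N))) := by
        gcongr
    _ = ((((d * B' * A)⁻¹ : ℝ≥0) : ℝ≥0∞) * ((d * B' * A : ℝ≥0) : ℝ≥0∞)) * (W * W⁻¹) * N := by ring
    _ = N := by rw [hcc, ENNReal.mul_inv_cancel hW0 hWt, one_mul, one_mul]
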